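/- Let X, X_1, ..., X_n be exchangeable real-valued random variables (not necessarily almost surely distinct). For k ∈ {1, ..., n}, let X_(k) denote the k-th smallest value among X_1, ..., X_n. Then Pr(X ≤ X_(k)) ≥ k/(n+1). -/

import Mathlib

/-!
Whatever the ties, at least `k` of the `n + 1` indices have fewer than `k` values strictly below
theirs. Summing the probabilities of these events over the indices gives at least `k`; by symmetry
they are all equal, so the one at index `0` has probability at least `k / (n + 1)`. On that event
`X 0` is at most the `k`-th smallest of the other values.
-/

open MeasureTheory

/-- The `k`-th smallest value (the `k`-th order statistic, `1 ≤ k ≤ n`) among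
`v 0, …, v (n-1)`: the least real `x` such that at least `k` of the values are `≤ x`. -/
noncomputable def orderStat {n : ℕ} (k : ℕ) (v : Fin n → ℝ) : ℝ :=
  sInf {x : ℝ | k ≤ (Finset.univ.filter (fun i => v i ≤ x)).card}

open Finset ProbabilityTheory

section Rank

variable {ι α : Type*} [Fintype ι] [LinearOrder α]

/-- The rank of the value `y j` within the family `y`: how many of the values are strictly smaller.
Ranks start at `0`, and tied values share the least rank of their block. -/
def rankBelow (y : ι → α) (j : ι) : ℕ :=
  #{i | y i < y j}

lemma rankBelow_comp_perm (y : ι → α) (σ : Equiv.Perm ι) (j : ι) :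
    rankBelow (fun i => y (σ i)) j = rankBelow y (σ j) :=
  Finset.card_equiv σ (by simp)

lemma le_card_rankBelow_lt (y : ι → α) {k : ℕ} (hk : k ≤ Fintype.card ι) :
    k ≤ #{j | rankBelow y j < k} := by
  by_contra! hlt
  -- A least value among those of rank at least `k` has only values of smaller rank below it.
  have hne : ({j | k ≤ rankBelow y j} : Finset ι).Nonempty := by
    obtain ⟨j, -, hj⟩ := exists_mem_notMem_of_card_lt_card (hlt.trans_le hk)
    exact ⟨j, by simpa using hj⟩
  obtain ⟨j, hj, hmin⟩ := exists_min_image _ y hne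
  have hbelow (i : ι) (hi : y i < y j) : rankBelow y i < k := by
    by_contra! hrank
    exact (hmin i (by simpa using hrank)).not_gt hi
  have hjk : rankBelow y j < k :=
    (card_le_card (monotone_filter_right _ fun i _ => hbelow i)).trans_lt hlt
  exact hjk.not_ge (by simpa using hj)

lemma measurableSet_rankBelow_lt [TopologicalSpace α] [OrderClosedTopology α]
    [SecondCountableTopology α] [MeasurableSpace α] [OpensMeasurableSpace α] (j : ι) (k : ℕ) :
    MeasurableSet {y : ι → α | rankBelow y j < k} := by
  have hrank : Measurable fun y : ι → α => rankBelow y j := by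
    simp only [rankBelow, card_filter]
    exact Finset.measurable_fun_sum _ fun i _ => Measurable.ite
      (measurableSet_lt (measurable_pi_apply i) (measurable_pi_apply j))
      measurable_const measurable_const
  exact measurableSet_lt hrank measurable_const

end Rank

lemma rankBelow_fin_zero {α : Type*} [LinearOrder α] {n : ℕ} (y : Fin (n + 1) → α) :
    rankBelow y 0 = #{i : Fin n | y i.succ < y 0} := by
  simp [rankBelow, Fin.card_filter_univ_succ]

lemma le_orderStat_of_card_lt {n k : ℕ} {v : Fin n → ℝ} {a : ℝ} (hkn : k ≤ n)
    (ha : #{i | v i < a} < k) : a ≤ orderStat k v := by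
  refine le_csInf ?_ fun x (hx : k ≤ #{i | v i ≤ x}) => ?_
  · obtain ⟨M, hM⟩ := (Set.finite_range v).bddAbove
    have hall : ∀ i, v i ≤ M := fun i => hM (Set.mem_range_self i)
    exact ⟨M, by simpa [hall] using hkn⟩
  · by_contra! hxa
    have hcard : #{i | v i ≤ x} ≤ #{i | v i < a} :=
      card_le_card (monotone_filter_right _ fun i _ hi => lt_of_le_of_lt hi hxa)
    exact ha.not_ge (hx.trans hcard)

section Measure

variable {Ω ι α : Type*} [MeasurableSpace Ω] {μ : Measure Ω} [Fintype ι]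

lemma mul_measure_univ_le_sum_measure {A : ι → Set Ω} [∀ ω, DecidablePred fun j => ω ∈ A j]
    {k : ℕ} (hA : ∀ᵐ ω ∂μ, k ≤ #{j | ω ∈ A j}) :
    k * μ Set.univ ≤ ∑ j, μ (A j) := by
  -- Measurable hulls keep the measure, and the integral is additive on their indicators.
  let B (j : ι) : Set Ω := toMeasurable μ (A j)
  have hB (j : ι) : MeasurableSet (B j) := measurableSet_toMeasurable μ (A j)
  have hcount : ∀ᵐ ω ∂μ, (k : ENNReal) ≤ ∑ j, (B j).indicator 1 ω := by
    filter_upwards [hA] with ω hω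
    calc (k : ENNReal) ≤ #{j | ω ∈ A j} := by exact_mod_cast hω
      _ = ∑ j, (A j).indicator 1 ω := by simp [Set.indicator_apply]
      _ ≤ ∑ j, (B j).indicator 1 ω := sum_le_sum fun j _ =>
          Set.indicator_le_indicator_of_subset (subset_toMeasurable μ (A j)) (by simp) ω
  calc k * μ Set.univ = ∫⁻ _, k ∂μ := (lintegral_const _).symm
    _ ≤ ∫⁻ ω, ∑ j, (B j).indicator 1 ω ∂μ := lintegral_mono_ae hcount
    _ = ∑ j, ∫⁻ ω, (B j).indicator 1 ω ∂μ :=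
        lintegral_finsetSum _ fun j _ => measurable_one.indicator (hB j)
    _ = ∑ j, μ (A j) := by simp only [lintegral_indicator_one (hB _), B, measure_toMeasurable]

variable [LinearOrder α] [TopologicalSpace α] [OrderClosedTopology α] [SecondCountableTopology α]
  [MeasurableSpace α] [OpensMeasurableSpace α] {X : ι → Ω → α}

lemma measure_rankBelow_perm_lt {σ : Equiv.Perm ι}
    (hσ : IdentDistrib (fun ω i => X (σ i) ω) (fun ω i => X i ω) μ μ) (j : ι) (k : ℕ) :
    μ {ω | rankBelow (X · ω) (σ j) < k} = μ {ω | rankBelow (X · ω) j < k} := by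
  have hevent : {ω | rankBelow (X · ω) (σ j) < k} =
      (fun ω i => X (σ i) ω) ⁻¹' {y | rankBelow y j < k} := by
    ext ω
    simp [rankBelow_comp_perm (X · ω)]
  rw [hevent]
  exact hσ.measure_mem_eq (measurableSet_rankBelow_lt j k)

lemma mul_measure_univ_le_card_mul_measure_rankBelow_lt {i₀ : ι}
    (hX : ∀ j, ∃ σ : Equiv.Perm ι, σ i₀ = j ∧
      IdentDistrib (fun ω i => X (σ i) ω) (fun ω i => X i ω) μ μ)
    {k : ℕ} (hk : k ≤ Fintype.card ι) :
    k * μ Set.univ ≤ Fintype.card ι * μ {ω | rankBelow (X · ω) i₀ < k} := by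
  have hsymm (j : ι) : μ {ω | rankBelow (X · ω) j < k} = μ {ω | rankBelow (X · ω) i₀ < k} := by
    obtain ⟨σ, rfl, hσ⟩ := hX j
    exact measure_rankBelow_perm_lt hσ i₀ k
  calc k * μ Set.univ ≤ ∑ j, μ {ω | rankBelow (X · ω) j < k} :=
        mul_measure_univ_le_sum_measure (.of_forall fun ω => le_card_rankBelow_lt (X · ω) hk)
    _ = Fintype.card ι * μ {ω | rankBelow (X · ω) i₀ < k} := by simp [hsymm]

end Measure

/-- For instance, `hX` holds when the joint law is invariant under cyclic shifts of the indices. -/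
theorem exchangeable_rank_quantile_ge_general
    {Ω : Type*} [MeasurableSpace Ω] (μ : Measure Ω) (n : ℕ) (X : Fin (n + 1) → Ω → ℝ)
    (hX : ∀ j, ∃ σ : Equiv.Perm (Fin (n + 1)), σ 0 = j ∧
      IdentDistrib (fun ω i => X (σ i) ω) (fun ω i => X i ω) μ μ)
    {k : ℕ} (hkn : k ≤ n) :
    k * μ Set.univ / (n + 1) ≤ μ {ω | X 0 ω ≤ orderStat k (fun i : Fin n => X i.succ ω)} := by
  have hrank : k * μ Set.univ ≤ (n + 1) * μ {ω | rankBelow (X · ω) 0 < k} := by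
    simpa using mul_measure_univ_le_card_mul_measure_rankBelow_lt hX (by simp; lia)
  calc k * μ Set.univ / (n + 1) ≤ μ {ω | rankBelow (X · ω) 0 < k} :=
        ENNReal.div_le_of_le_mul' hrank
    _ ≤ μ {ω | X 0 ω ≤ orderStat k (fun i : Fin n => X i.succ ω)} := measure_mono fun ω hω =>
        le_orderStat_of_card_lt hkn ((rankBelow_fin_zero (X · ω)).symm.trans_lt hω)

/-- Let `X 0, X 1, …, X n` be exchangeable real-valued random variables (where `X 0` plays
the role of the test variable `X`), with ties allowed.  For `1 ≤ k ≤ n`, the probability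
that `X 0` is at most the `k`-th smallest among `X 1, …, X n` is at least `k/(n+1)`. -/
theorem exchangeable_rank_quantile_ge
    {Ω : Type*} [MeasurableSpace Ω] (μ : Measure Ω) [IsProbabilityMeasure μ]
    (n : ℕ) (X : Fin (n + 1) → Ω → ℝ) (hX : ∀ i, Measurable (X i))
    (hexch : ∀ σ : Equiv.Perm (Fin (n + 1)),
      Measure.map (fun ω => fun i => X (σ i) ω) μ = Measure.map (fun ω => fun i => X i ω) μ)
    (k : ℕ) (hk1 : 1 ≤ k) (hkn : k ≤ n) :
    (k : ENNReal) / ((n : ENNReal) + 1) ≤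
      μ {ω | X 0 ω ≤ orderStat k (fun i : Fin n => X i.succ ω)} := by
  have hX' : AEMeasurable (fun ω i => X i ω) μ := (measurable_pi_lambda _ hX).aemeasurable
  simpa using exchangeable_rank_quantile_ge_general μ n X (fun j => ⟨Equiv.swap 0 j,
    Equiv.swap_apply_left 0 j, (measurable_pi_lambda _ fun i => hX _).aemeasurable, hX',
    hexch (Equiv.swap 0 j)⟩) hkn
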